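/- Let G be a branch group acting on a rooted tree T, let H be a subgroup of finite index in G and let K be a normal subgroup of H. Then there exists n_0 such that for every integer n ≥ n_0 there is a union X of H-orbits in L_n such that: rist_G(X)' ≤ K, the subgroups K and rist_G(L_n \ X) intersect trivially and commute elementwise (i.e. K ∩ rist_G(L_n \ X) = 1 and [K, rist_G(L_n \ X)] = 1), and consequently K ∩ rist_G(n)' = rist_G(X)'. -/

import Mathlib

/-!  Common definitions: rooted trees of type `(m n)`, tree automorphisms,
rigid stabilizers, branch groups, and auxiliary notions. -/

universe u

/-- Vertices of the rooted tree of type `m`: finite sequences `(x_0, …, x_{n-1})`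
with `x_i ∈ {1, …, m i}` (encoded as `Fin (m i)`). -/
def Vertex (m : ℕ → ℕ) : Type := Σ n : ℕ, ∀ i : Fin n, Fin (m i)

namespace Vertex

variable {m : ℕ → ℕ}

/-- The level of a vertex: its length. -/
def level (v : Vertex m) : ℕ := v.1

/-- `v` is a (weak) prefix of `w`; i.e. `w` lies in the subtree `T_v`
(`w = v` or `w` is a descendant of `v`). -/
def IsPrefix (v w : Vertex m) : Prop :=
  ∃ h : v.1 ≤ w.1, ∀ i : Fin v.1, w.2 (Fin.castLE h i) = v.2 i

/-- `w` is a child (one-step extension) of `v`. -/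
def IsChild (v w : Vertex m) : Prop := w.1 = v.1 + 1 ∧ IsPrefix v w

end Vertex

/-- The `n`-th layer `L_n` of the tree: all vertices of level `n`. -/
def layer (m : ℕ → ℕ) (n : ℕ) : Set (Vertex m) := {v | v.1 = n}

section Rist

variable {m : ℕ → ℕ} (G : Type*) [Group G] [MulAction G (Vertex m)]

/-- The rigid stabilizer of a vertex `v`: all elements fixing every vertex
outside the subtree `T_v`. -/
def rist (v : Vertex m) : Subgroup G :=
  ⨅ w ∈ {w : Vertex m | ¬ Vertex.IsPrefix v w}, MulAction.stabilizer G w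

/-- The subgroup generated by the rigid stabilizers of the vertices in `X`. -/
def ristSet (X : Set (Vertex m)) : Subgroup G := ⨆ v ∈ X, rist G v

/-- `rist_G(n)`, the rigid stabilizer of the `n`-th layer. -/
def ristLayer (m : ℕ → ℕ) (G : Type*) [Group G] [MulAction G (Vertex m)] (n : ℕ) :
    Subgroup G :=
  ristSet G (layer m n)

/-- The orbit of the vertex `v` under a subgroup `H ≤ G`. -/
def subOrbit (H : Subgroup G) (v : Vertex m) : Set (Vertex m) :=
  {w | ∃ h ∈ H, h • v = w}

/-- The set of orbits of a subgroup `H ≤ G` on a set `X` of vertices. -/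
def orbitsOn (H : Subgroup G) (X : Set (Vertex m)) : Set (Set (Vertex m)) :=
  (fun v => subOrbit G H v) '' X

end Rist

/-- `G` is a branch group on the rooted tree of type `m` (with respect to the given
action): the action is faithful and by tree automorphisms, `G` acts transitively on
each layer, and each `rist_G(n)` has finite index in `G`. -/
structure IsBranchGroup (m : ℕ → ℕ) (G : Type*) [Group G] [MulAction G (Vertex m)] :
    Prop where
  faithful : ∀ g : G, (∀ v : Vertex m, g • v = v) → g = 1
  aut : ∀ (g : G) (v w : Vertex m), Vertex.IsChild v w ↔ Vertex.IsChild (g • v) (g • w)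
  trans : ∀ v w : Vertex m, v.1 = w.1 → ∃ g : G, g • v = w
  ristFiniteIndex : ∀ n : ℕ, (ristLayer m G n).FiniteIndex

/-- A group is virtually soluble if it has a soluble subgroup of finite index. -/
def VirtuallySolvable (Γ : Type*) [Group Γ] : Prop :=
  ∃ S : Subgroup Γ, S.FiniteIndex ∧ IsSolvable ↥S

/-- A group is virtually abelian if it has an abelian subgroup of finite index. -/
def VirtuallyAbelian (Γ : Type*) [Group Γ] : Prop :=
  ∃ S : Subgroup Γ, S.FiniteIndex ∧ ∀ a ∈ S, ∀ b ∈ S, a * b = b * a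

/-- For subgroups `A ≤ B` of a group with `A` normalised by `B`, this says that the
factor `B/A` belongs to the class `𝔛`. -/
def FactorIn (𝔛 : (Γ : Type u) → [inst : Group Γ] → Prop) {G : Type u} [Group G]
    (A B : Subgroup G) : Prop :=
  ∃ hn : (A.subgroupOf B).Normal, letI := hn; 𝔛 (↥B ⧸ A.subgroupOf B)

/-- The factor `B/A` is virtually soluble. -/
def FactorVirtuallySolvable {G : Type*} [Group G] (A B : Subgroup G) : Prop :=
  ∃ hn : (A.subgroupOf B).Normal,
    letI := hn; VirtuallySolvable (↥B ⧸ A.subgroupOf B)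

/-- The factor `B/A` is virtually abelian. -/
def FactorVirtuallyAbelian {G : Type*} [Group G] (A B : Subgroup G) : Prop :=
  ∃ hn : (A.subgroupOf B).Normal,
    letI := hn; VirtuallyAbelian (↥B ⧸ A.subgroupOf B)

/-- `Γ` has `r` infinite normal subgroups that generate their direct product in `Γ`:
each of them intersects trivially the subgroup generated by the others. -/
def HasIndepFamily (Γ : Type*) [Group Γ] (r : ℕ) : Prop :=
  ∃ N : Fin r → Subgroup Γ, (∀ i, (N i).Normal) ∧ (∀ i, Infinite ↥(N i)) ∧
    ∀ i, N i ⊓ (⨆ j ∈ ({i}ᶜ : Set (Fin r)), N j) = ⊥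

/-! The normal core `N` of the normalizer of `K` has finite index, so it is transitive on every
layer below each vertex of some fixed level. Hence below such a vertex `K` either moves nothing or
moves every vertex of large level, and for large `n` the vertices of level `n` split into the set
`X` of those moved by `K` and those whose whole subtree is fixed by `K`. The latter give the
statements about the complement of `X`.

If `k ∈ K` moves `v` and `A ≤ rist v` normalizes `K`, then `k A k⁻¹` commutes with `A`, so that
`⁅a, b⁆ = ⁅⁅k, a⁻¹⁆, b⁆ ∈ K` for all `a, b ∈ A`. Taking `A = rist v ⊓ N` gives
`D = ⁅rist v ⊓ N, rist v ⊓ N⁆ ≤ K`, and applying the same argument to `D` in place of `K`, with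
`A = rist w` for `w` far enough below `v`, gives `⁅rist w, rist w⁆ ≤ D`. If `D` is trivial, then
some `rist w ⊓ N` is trivial, because an element moving `w` commutes with no nontrivial element of
`rist w`; so a rigid stabilizer is finite, and `rist w` is trivial for `w` of large level. -/

open Subgroup MulAction Filter Set
open scoped commutatorElement Pointwise

section GroupTheory

variable {G : Type*} [Group G]

/- For `k ∈ K`, the element `⁅k, a⁻¹⁆ = (k * a⁻¹ * k⁻¹) * a` lies in `K` and acts on `A` by
conjugation as `a` does, because its first factor centralizes `A`. -/
theorem commutator_le_of_conj_commute {A K : Subgroup G} (hAK : A ≤ normalizer K) {k : G}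
    (hk : k ∈ K) (hcomm : ∀ a ∈ A, ∀ b ∈ A, Commute (k * a * k⁻¹) b) : ⁅A, A⁆ ≤ K := by
  rw [commutator_le]
  intro a ha b hb
  set p := k * a⁻¹ * k⁻¹ with hp
  have hpa : p * a ∈ K := by
    simpa [hp, mul_assoc] using
      mul_mem hk (le_normalizer_iff.1 hAK _ (inv_mem ha) _ (inv_mem hk))
  have hpab : ⁅p * a, b⁆ ∈ K := by
    simpa [commutatorElement_def, mul_assoc] using
      mul_mem hpa (le_normalizer_iff.1 hAK _ hb _ (inv_mem hpa))
  have hcentral : ∀ c ∈ A, Commute p c := hcomm _ (inv_mem ha)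
  have hp_comm : Commute p ⁅a, b⁆ :=
    hcentral _ (commutator_le_self A (commutator_mem_commutator ha hb))
  rwa [commutatorElement_mul_left_eq_conj_mul, hp_comm.eq, (hcentral b hb).commutator_eq,
    mul_inv_cancel_right, mul_one] at hpab

theorem commutator_iSup_left_le {ι : Sort*} {A : ι → Subgroup G} {B L : Subgroup G}
    (hnorm : ∀ i, A i ≤ normalizer L) (hcomm : ∀ i, ⁅A i, B⁆ ≤ L) : ⁅⨆ i, A i, B⁆ ≤ L := by
  rw [commutator_le]
  intro a ha b hb
  induction ha using Subgroup.iSup_induction' with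
  | hp i a ha => exact hcomm i (commutator_mem_commutator ha hb)
  | h1 => simp
  | hmul x y hx _ ihx ihy =>
    rw [commutatorElement_mul_left_eq_conj_mul]
    exact mul_mem (le_normalizer_iff.1 (iSup_le hnorm) x hx _ ihy) ihx

theorem commutator_iSup_le_of_pairwise_commutator_eq_bot {ι : Type*} {A : ι → Subgroup G}
    (hA : Pairwise fun i j => ⁅A i, A j⁆ = ⊥) : ⁅⨆ i, A i, ⨆ i, A i⁆ ≤ ⨆ i, ⁅A i, A i⁆ := by
  have hnorm (j : ι) : A j ≤ normalizer ((⨆ i, ⁅A i, A i⁆ : Subgroup G) : Set G) := by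
    refine le_trans (le_iInf fun i => ?_) (iInf_normalizer_le_normalizer_iSup _)
    obtain rfl | hji := eq_or_ne j i
    · exact normalizer_commutator_ge_left _ _
    · rw [le_normalizer_iff_commutator_le_right]
      calc ⁅A j, ⁅A i, A i⁆⁆ ≤ ⁅A j, A i⁆ := commutator_mono le_rfl (commutator_le_self _)
        _ = ⊥ := hA hji
        _ ≤ _ := bot_le
  refine commutator_iSup_left_le hnorm fun i => ?_
  rw [commutator_comm]
  refine commutator_iSup_left_le hnorm fun j => ?_
  obtain rfl | hji := eq_or_ne j i
  · exact le_iSup (fun i => ⁅A i, A i⁆) j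
  · exact (hA hji).trans_le bot_le

theorem normalizer_le_normalizer_commutator_inf (A N : Subgroup G) [N.Normal] :
    normalizer (A : Set G) ≤ normalizer (⁅A ⊓ N, A ⊓ N⁆ : Subgroup G) := by
  have hinf : normalizer (A : Set G) ≤ normalizer ((A ⊓ N : Subgroup G) : Set G) :=
    (le_inf le_rfl le_normalizer_of_normal).trans inf_normalizer_le_normalizer_inf
  intro g hg
  rw [mem_normalizer_iff_map_conj_eq, map_commutator, mem_normalizer_iff_map_conj_eq.1 (hinf hg)]

theorem inf_sup_eq_left_of_le_normalizer {A B K : Subgroup G} (hAK : A ≤ K)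
    (hAB : A ≤ normalizer B) (hKB : K ⊓ B = ⊥) : K ⊓ (A ⊔ B) = A := by
  apply SetLike.coe_injective
  rw [inf_comm, coe_inf, coe_mul_of_left_le_normalizer_right A B hAB, ← mul_inf_assoc A B K hAK,
    inf_comm, hKB]
  simp

theorem finite_of_inf_eq_bot {A N : Subgroup G} [N.FiniteIndex] (h : A ⊓ N = ⊥) : Finite A := by
  have hbot : N.subgroupOf A = ⊥ := subgroupOf_eq_bot.2 (disjoint_iff.2 (inf_comm A N ▸ h))
  have : (N.subgroupOf A).index ≠ 0 := FiniteIndex.index_ne_zero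
  exact Nat.finite_of_card_ne_zero (by rwa [hbot, index_bot] at this)

end GroupTheory

section GroupAction

variable {G α : Type*} [Group G] [MulAction G α]

theorem le_stabilizer_smul_iff {K : Subgroup G} {g : G} (hg : g ∈ normalizer (K : Set G)) (a : α) :
    K ≤ stabilizer G (g • a) ↔ K ≤ stabilizer G a := by
  rw [stabilizer_smul_eq_stabilizer_map_conj]
  nth_rw 1 [← mem_normalizer_iff_map_conj_eq.1 hg]
  exact map_le_map_iff_of_injective (MulAut.conj g).injective

theorem exists_not_le_stabilizer_of_not_le_fixingSubgroup {K : Subgroup G} {s : Set α}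
    (h : ¬ K ≤ fixingSubgroup G s) : ∃ a ∈ s, ¬ K ≤ stabilizer G a := by
  contrapose! h
  exact fun k hk => mem_fixingSubgroup_iff G |>.2 fun a ha => h a ha hk

variable [FaithfulSMul G α]

theorem exists_smul_ne_of_ne_one {g : G} (hg : g ≠ 1) : ∃ a : α, g • a ≠ a := by
  contrapose! hg
  exact eq_of_smul_eq_smul fun a : α => by rw [hg, one_smul]

theorem fixingSubgroup_inf_fixingSubgroup_compl (s : Set α) :
    fixingSubgroup G s ⊓ fixingSubgroup G sᶜ = ⊥ := by
  rw [← fixingSubgroup_union, union_compl_self, eq_bot_iff]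
  exact fun g hg => eq_of_smul_eq_smul fun a : α => by
    rw [(mem_fixingSubgroup_iff G).1 hg a trivial, one_smul]

theorem commutator_fixingSubgroup_fixingSubgroup_compl (s : Set α) :
    ⁅fixingSubgroup G s, fixingSubgroup G sᶜ⁆ = ⊥ := by
  rw [eq_bot_iff, commutator_le]
  intro g hg h hh
  have hdisj : (toPerm g : Equiv.Perm α).Disjoint (toPerm h) := fun a =>
    (em (a ∈ s)).imp ((mem_fixingSubgroup_iff G).1 hg a) ((mem_fixingSubgroup_iff G).1 hh a)
  have hcomm : Commute g h := toPerm_injective (β := α) <|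
    ((toPermHom G α).map_mul g h).trans (hdisj.commute.eq.trans ((toPermHom G α).map_mul h g).symm)
  exact hcomm.commutator_eq

end GroupAction

namespace Vertex

variable {m : ℕ → ℕ} {u v w : Vertex m}

theorem IsPrefix.refl (v : Vertex m) : v.IsPrefix v := ⟨le_rfl, fun _ => rfl⟩

theorem IsPrefix.trans (huv : u.IsPrefix v) (hvw : v.IsPrefix w) : u.IsPrefix w :=
  ⟨huv.1.trans hvw.1, fun i => (hvw.2 (Fin.castLE huv.1 i)).trans (huv.2 i)⟩

theorem IsPrefix.level_le (h : v.IsPrefix w) : v.level ≤ w.level := h.1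

theorem IsPrefix.eq_of_level_eq (hu : u.IsPrefix w) (hv : v.IsPrefix w)
    (h : u.level = v.level) : u = v := by
  obtain ⟨n, x⟩ := u
  obtain ⟨_, y⟩ := v
  obtain rfl : n = _ := h
  exact congrArg (Sigma.mk n) (funext fun i => (hu.2 i).symm.trans (hv.2 i))

theorem exists_isPrefix_of_le_level {n : ℕ} (h : n ≤ w.level) :
    ∃ u : Vertex m, u.IsPrefix w ∧ u.level = n :=
  ⟨⟨n, fun i => w.2 (Fin.castLE h i)⟩, ⟨h, fun _ => rfl⟩, rfl⟩

theorem IsPrefix.of_level_le (hu : u.IsPrefix w) (hv : v.IsPrefix w) (h : u.level ≤ v.level) :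
    u.IsPrefix v := by
  obtain ⟨t, htv, ht⟩ := exists_isPrefix_of_le_level h
  rwa [hu.eq_of_level_eq (htv.trans hv) ht.symm]

/-- The vertex set of the subtree `T_v`: the vertex `v` and its descendants. -/
def subtree (v : Vertex m) : Set (Vertex m) := {w | v.IsPrefix w}

theorem mem_subtree : w ∈ v.subtree ↔ v.IsPrefix w := Iff.rfl

theorem disjoint_subtree (h : u.level = v.level) (huv : u ≠ v) :
    Disjoint u.subtree v.subtree :=
  Set.disjoint_left.2 fun _ hu hv => huv (IsPrefix.eq_of_level_eq hu hv h)

end Vertex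

open Vertex

theorem finite_layer (m : ℕ → ℕ) (n : ℕ) : (layer m n).Finite := by
  refine (finite_range fun x : ∀ i : Fin n, Fin (m i) => (⟨n, x⟩ : Vertex m)).subset ?_
  rintro ⟨_, x⟩ rfl
  exact ⟨x, rfl⟩

/-- `G` acts on the rooted tree of type `m` by tree automorphisms. -/
class IsTreeAction (m : ℕ → ℕ) (G : Type*) [Group G] [MulAction G (Vertex m)] : Prop where
  isChild_smul_iff (g : G) (v w : Vertex m) : v.IsChild w ↔ (g • v).IsChild (g • w)

/-- `G` acts by tree automorphisms and transitively on every layer. -/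
class IsLevelTransitive (m : ℕ → ℕ) (G : Type*) [Group G] [MulAction G (Vertex m)] : Prop
    extends IsTreeAction m G where
  exists_smul_eq (v w : Vertex m) : v.level = w.level → ∃ g : G, g • v = w

section TreeAction

variable {m : ℕ → ℕ} {G : Type*} [Group G] [MulAction G (Vertex m)] [IsTreeAction m G]

theorem IsTreeAction.level_smul (g : G) (v : Vertex m) : (g • v).level = v.level := by
  have le_level_smul : ∀ n (g : G) (v : Vertex m), v.level = n → n ≤ (g • v).level := by
    intro n
    induction n with
    | zero => exact fun _ _ _ => Nat.zero_le _
    | succ n ih =>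
      intro g v hv
      obtain ⟨p, hpv, hp⟩ := exists_isPrefix_of_le_level (w := v) (n := n) (by omega)
      have hchild : p.IsChild v := ⟨hv.trans (congrArg (· + 1) hp.symm), hpv⟩
      exact (Nat.succ_le_succ (ih g p hp)).trans_eq
        ((isChild_smul_iff g p v).1 hchild).1.symm
  refine le_antisymm ?_ (le_level_smul _ g v rfl)
  simpa using le_level_smul _ g⁻¹ (g • v) rfl

theorem Vertex.IsPrefix.smul (g : G) {v w : Vertex m} (h : v.IsPrefix w) :
    (g • v).IsPrefix (g • w) := by
  obtain ⟨d, hd⟩ := Nat.exists_eq_add_of_le h.level_le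
  induction d generalizing w with
  | zero =>
    rw [h.eq_of_level_eq (.refl w) hd.symm]
    exact .refl _
  | succ d ih =>
    obtain ⟨p, hpw, hp⟩ := exists_isPrefix_of_le_level (w := w) (n := v.level + d) (by omega)
    have hchild : p.IsChild w := ⟨hd.trans (congrArg (· + 1) hp.symm), hpw⟩
    have hvp : v.IsPrefix p := h.of_level_le hpw (by omega)
    exact (ih hvp hp).trans ((IsTreeAction.isChild_smul_iff g p w).1 hchild).2

theorem Vertex.smul_subtree (g : G) (v : Vertex m) : g • v.subtree = (g • v).subtree := by
  ext w
  simp only [mem_smul_set_iff_inv_smul_mem, mem_subtree]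
  exact ⟨fun h => by simpa using h.smul g, fun h => by simpa using h.smul g⁻¹⟩

theorem stabilizer_le_stabilizer_of_isPrefix {v w : Vertex m} (h : v.IsPrefix w) :
    stabilizer G w ≤ stabilizer G v := by
  intro g hg
  have hgv : (g • v).IsPrefix w := by simpa [mem_stabilizer_iff.1 hg] using h.smul g
  exact hgv.eq_of_level_eq h (IsTreeAction.level_smul g v)

end TreeAction

section RigidStabilizer

variable {m : ℕ → ℕ} {G : Type*} [Group G] [MulAction G (Vertex m)]

theorem rist_eq_fixingSubgroup (v : Vertex m) : rist G v = fixingSubgroup G v.subtreeᶜ := by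
  ext g
  simp [rist, mem_fixingSubgroup_iff, subtree]

theorem smul_eq_of_mem_rist {v w : Vertex m} {g : G} (hg : g ∈ rist G v) (hw : w ∉ v.subtree) :
    g • w = w :=
  (mem_fixingSubgroup_iff G).1 (rist_eq_fixingSubgroup (G := G) v ▸ hg) w hw

theorem rist_le_rist_of_isPrefix {v w : Vertex m} (h : v.IsPrefix w) : rist G w ≤ rist G v := by
  simp only [rist_eq_fixingSubgroup]
  exact fixingSubgroup_antitone G _ (compl_subset_compl.2 fun _ => h.trans)

theorem rist_le_ristSet {X : Set (Vertex m)} {v : Vertex m} (hv : v ∈ X) :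
    rist G v ≤ ristSet G X := le_biSup (rist G) hv

theorem ristSet_mono {X Y : Set (Vertex m)} (h : X ⊆ Y) : ristSet G X ≤ ristSet G Y :=
  biSup_mono h

theorem ristSet_le_fixingSubgroup_compl (X : Set (Vertex m)) :
    ristSet G X ≤ fixingSubgroup G (⋃ v ∈ X, v.subtree)ᶜ :=
  iSup₂_le fun v hv => (rist_eq_fixingSubgroup v).trans_le <|
    fixingSubgroup_antitone G _ <| compl_subset_compl.2 <| subset_biUnion_of_mem hv

theorem map_conj_rist [IsTreeAction m G] (g : G) (v : Vertex m) :
    (rist G v).map (MulAut.conj g).toMonoidHom = rist G (g • v) := by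
  rw [rist_eq_fixingSubgroup, rist_eq_fixingSubgroup, ← smul_subtree, ← smul_set_compl,
    SubMulAction.fixingSubgroup_smul_eq_fixingSubgroup_map_conj]

theorem conj_mem_rist [IsTreeAction m G] (g : G) {v : Vertex m} {x : G} (hx : x ∈ rist G v) :
    g * x * g⁻¹ ∈ rist G (g • v) :=
  map_conj_rist g v ▸ mem_map_of_mem _ hx

theorem stabilizer_le_normalizer_rist [IsTreeAction m G] (v : Vertex m) :
    stabilizer G v ≤ normalizer (rist G v : Set G) :=
  fun g hg => mem_normalizer_iff_map_conj_eq.2 <|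
    (map_conj_rist g v).trans (congrArg (rist G) hg)

variable [FaithfulSMul G (Vertex m)]

theorem commutator_rist_rist_eq_bot {u v : Vertex m} (h : u.level = v.level) (huv : u ≠ v) :
    ⁅rist G u, rist G v⁆ = ⊥ := by
  have : rist G u ≤ fixingSubgroup G v.subtree := by
    rw [rist_eq_fixingSubgroup]
    exact fixingSubgroup_antitone G _ (disjoint_subtree h huv).subset_compl_left
  rw [eq_bot_iff, ← commutator_fixingSubgroup_fixingSubgroup_compl v.subtree,
    ← rist_eq_fixingSubgroup]
  exact commutator_mono this le_rfl

theorem commutator_ristSet_le {n : ℕ} {X : Set (Vertex m)} (hX : X ⊆ layer m n) :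
    ⁅ristSet G X, ristSet G X⁆ ≤ ⨆ v ∈ X, ⁅rist G v, rist G v⁆ := by
  rw [ristSet, iSup_subtype', iSup_subtype']
  exact commutator_iSup_le_of_pairwise_commutator_eq_bot fun u v huv =>
    commutator_rist_rist_eq_bot ((hX u.2).trans (hX v.2).symm) (Subtype.coe_ne_coe.2 huv)

theorem commutator_ristSet_le_commutator_sup_ristSet_sdiff {n : ℕ} {Y : Set (Vertex m)}
    (hY : Y ⊆ layer m n) (X : Set (Vertex m)) :
    ⁅ristSet G Y, ristSet G Y⁆ ≤ ⁅ristSet G X, ristSet G X⁆ ⊔ ristSet G (Y \ X) := by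
  refine (commutator_ristSet_le hY).trans (iSup₂_le fun v hv => ?_)
  by_cases hvX : v ∈ X
  · exact le_sup_of_le_left (commutator_mono (rist_le_ristSet hvX) (rist_le_ristSet hvX))
  · exact le_sup_of_le_right ((commutator_le_self _).trans (rist_le_ristSet ⟨hv, hvX⟩))

theorem commutator_le_of_le_rist [IsTreeAction m G] {A K : Subgroup G} {v : Vertex m}
    (hAv : A ≤ rist G v) (hAK : A ≤ normalizer K) (hKv : ¬ K ≤ stabilizer G v) : ⁅A, A⁆ ≤ K := by
  obtain ⟨k, hk, hkv⟩ := SetLike.not_le_iff_exists.1 hKv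
  refine commutator_le_of_conj_commute hAK hk fun a ha b hb => ?_
  have hbot := commutator_rist_rist_eq_bot (G := G) (IsTreeAction.level_smul k v) hkv
  rw [← commutatorElement_eq_one_iff_commute, ← Subgroup.mem_bot, ← hbot]
  exact commutator_mem_commutator (conj_mem_rist k (hAv ha)) (hAv hb)

end RigidStabilizer

section Transitivity

variable {m : ℕ → ℕ} {G : Type*} [Group G] [MulAction G (Vertex m)]

/-- Any two vertices of the subtree `T_x` of equal level are related by an element of the
subgroup `S`. -/
def IsTransitiveBelow (S : Subgroup G) (x : Vertex m) : Prop :=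
  ∀ y ∈ x.subtree, ∀ z ∈ x.subtree, y.level = z.level → ∃ s ∈ S, s • y = z

theorem IsTransitiveBelow.smul [IsTreeAction m G] {N : Subgroup G} [N.Normal] {x : Vertex m}
    (h : IsTransitiveBelow N x) (g : G) : IsTransitiveBelow N (g • x) := by
  intro y hy z hz hyz
  rw [← smul_subtree, mem_smul_set_iff_inv_smul_mem] at hy hz
  obtain ⟨s, hs, hsy⟩ := h _ hy _ hz (by simpa only [IsTreeAction.level_smul] using hyz)
  refine ⟨g * s * g⁻¹, Normal.conj_mem ‹_› s hs g, ?_⟩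
  rw [mul_smul, mul_smul, hsy, smul_inv_smul]

theorem IsTransitiveBelow.not_le_stabilizer [IsTreeAction m G] {S K : Subgroup G}
    {x w y : Vertex m} (hS : IsTransitiveBelow S x) (hSK : S ≤ normalizer K) (hw : w ∈ x.subtree)
    (hy : y ∈ x.subtree) (hwy : w.level ≤ y.level) (hKw : ¬ K ≤ stabilizer G w) :
    ¬ K ≤ stabilizer G y := by
  obtain ⟨u, huy, hu⟩ := exists_isPrefix_of_le_level hwy
  have hxu : x.IsPrefix u := IsPrefix.of_level_le hy huy (hu ▸ IsPrefix.level_le hw)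
  obtain ⟨s, hs, rfl⟩ := hS w hw u hxu hu.symm
  rw [← le_stabilizer_smul_iff (hSK hs)] at hKw
  exact fun hKy => hKw (hKy.trans (stabilizer_le_stabilizer_of_isPrefix huy))

variable [IsLevelTransitive m G]

theorem isTransitiveBelow_stabilizer (x : Vertex m) : IsTransitiveBelow (stabilizer G x) x := by
  intro y hy z hz hyz
  obtain ⟨g, rfl⟩ := IsLevelTransitive.exists_smul_eq (G := G) y z hyz
  exact ⟨g, (IsPrefix.smul g hy).eq_of_level_eq hz (IsTreeAction.level_smul g x), rfl⟩

/- Choose `x` for which the image of the stabilizer in the finite group `G ⧸ N` is minimal. For `y`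
below `x` the stabilizer of `y` has the same image, so any `g` fixing `x` can be corrected by an
element fixing `y` so as to lie in `N`. -/
theorem exists_isTransitiveBelow (N : Subgroup G) [N.Normal] [N.FiniteIndex] :
    ∃ x : Vertex m, IsTransitiveBelow N x := by
  let image (x : Vertex m) : Subgroup (G ⧸ N) := (stabilizer G x).map (QuotientGroup.mk' N)
  let root : Vertex m := ⟨0, fun i => i.elim0⟩
  obtain ⟨x, -, hx⟩ := exists_minimalFor_of_wellFoundedLT (fun _ => True) image ⟨root, trivial⟩
  refine ⟨x, fun y hy z hz hyz => ?_⟩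
  obtain ⟨g, hg, rfl⟩ := isTransitiveBelow_stabilizer (G := G) x y hy z hz hyz
  have himage : image x ≤ image y := hx trivial (map_mono (stabilizer_le_stabilizer_of_isPrefix hy))
  obtain ⟨s, hs, hsg⟩ := mem_map.1 (himage (mem_map_of_mem _ hg))
  refine ⟨g * s⁻¹, Normal.mem_comm ‹_› (QuotientGroup.eq.1 hsg), ?_⟩
  rw [mul_smul, inv_smul_eq_iff.2 (mem_stabilizer_iff.1 hs).symm]

theorem exists_forall_isTransitiveBelow (N : Subgroup G) [N.Normal] [N.FiniteIndex] :
    ∃ p, ∀ x ∈ layer m p, IsTransitiveBelow N x := by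
  obtain ⟨x, hx⟩ := exists_isTransitiveBelow (m := m) N
  refine ⟨x.level, fun y hy => ?_⟩
  obtain ⟨g, rfl⟩ := IsLevelTransitive.exists_smul_eq (G := G) x y hy.symm
  exact hx.smul g

theorem eventually_le_fixingSubgroup_subtree (K : Subgroup G)
    [(normalizer (K : Set G)).FiniteIndex] : ∀ᶠ n in atTop, ∀ v ∈ layer m n,
      K ≤ stabilizer G v → K ≤ fixingSubgroup G v.subtree := by
  obtain ⟨p, hp⟩ := exists_forall_isTransitiveBelow (m := m) (normalizer (K : Set G)).normalCore
  have hlarge : ∀ x ∈ layer m p, ∀ᶠ n in atTop, ∀ v ∈ layer m n, v ∈ x.subtree →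
      K ≤ stabilizer G v → K ≤ fixingSubgroup G x.subtree := by
    intro x hx
    by_cases hKx : K ≤ fixingSubgroup G x.subtree
    · exact .of_forall fun _ _ _ _ _ => hKx
    · obtain ⟨w, hw, hKw⟩ := exists_not_le_stabilizer_of_not_le_fixingSubgroup hKx
      filter_upwards [eventually_ge_atTop w.level] with n hn v hv hxv hKv
      have hwv : w.level ≤ v.level := hn.trans_eq hv.symm
      exact absurd hKv ((hp x hx).not_le_stabilizer (normalCore_le _) hw hxv hwv hKw)
  filter_upwards [(eventually_all_finite (finite_layer m p)).2 hlarge, eventually_ge_atTop p]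
    with n hn hpn v hv hKv
  obtain ⟨x, hxv, hx⟩ := exists_isPrefix_of_le_level (hpn.trans_eq hv.symm)
  exact (hn x hx v hv hxv hKv).trans (fixingSubgroup_antitone G _ fun _ => hxv.trans)

end Transitivity

section DerivedRigidStabilizer

variable {m : ℕ → ℕ} {G : Type*} [Group G] [MulAction G (Vertex m)] [FaithfulSMul G (Vertex m)]

theorem exists_rist_inf_eq_bot_of_commutator_eq_bot [IsTreeAction m G] {v : Vertex m}
    {N : Subgroup G} (h : ⁅rist G v ⊓ N, rist G v ⊓ N⁆ = ⊥) :
    ∃ w : Vertex m, rist G w ⊓ N = ⊥ := by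
  obtain hbot | ⟨f, hf, hf1⟩ := (rist G v ⊓ N).bot_or_exists_ne_one
  · exact ⟨v, hbot⟩
  obtain ⟨w, hfw⟩ := exists_smul_ne_of_ne_one (α := Vertex m) hf1
  have hvw : v.IsPrefix w := by_contra fun hvw => hfw (smul_eq_of_mem_rist hf.1 hvw)
  refine ⟨w, eq_bot_iff.2 fun g hg => eq_of_smul_eq_smul fun x : Vertex m => ?_⟩
  have hg' : g ∈ rist G v ⊓ N := ⟨rist_le_rist_of_isPrefix hvw hg.1, hg.2⟩
  have hfg : Commute f g := commutatorElement_eq_one_iff_commute.1 <|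
    Subgroup.mem_bot.1 (h ▸ commutator_mem_commutator hf hg')
  rw [one_smul]
  by_cases hx : x ∈ w.subtree
  · have hfx : f • x ∉ w.subtree :=
      Set.disjoint_left.1 (disjoint_subtree (IsTreeAction.level_smul f w) hfw) (IsPrefix.smul f hx)
    apply smul_left_cancel f
    rw [← mul_smul, hfg.eq, mul_smul, smul_eq_of_mem_rist hg.1 hfx]
  · exact smul_eq_of_mem_rist hg.1 hx

variable [IsLevelTransitive m G]

theorem eventually_rist_eq_bot (w : Vertex m) [Finite (rist G w)] :
    ∀ᶠ n in atTop, ∀ u ∈ layer m n, rist G u = ⊥ := by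
  have heq_one : ∀ᶠ n in atTop, ∀ g : rist G w,
      (∀ v : Vertex m, v.level < n → (g : G) • v = v) → (g : G) = 1 := by
    refine eventually_all.2 fun g => ?_
    by_cases hg : (g : G) = 1
    · exact .of_forall fun _ _ => hg
    · obtain ⟨v, hv⟩ := exists_smul_ne_of_ne_one (α := Vertex m) hg
      filter_upwards [eventually_gt_atTop v.level] with n hn hfix
      exact absurd (hfix v hn) hv
  filter_upwards [heq_one, eventually_ge_atTop w.level] with n hn hwn u hu
  obtain ⟨t, htu, ht⟩ := exists_isPrefix_of_le_level (hwn.trans_eq hu.symm)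
  obtain ⟨g, hg⟩ := IsLevelTransitive.exists_smul_eq (G := G) t w ht
  refine eq_bot_iff.2 fun x hx => ?_
  have hgx : g * x * g⁻¹ ∈ rist G (g • u) := conj_mem_rist g hx
  refine conj_eq_one_iff.1 (hn ⟨_, rist_le_rist_of_isPrefix (hg ▸ htu.smul g) hgx⟩ fun v hv => ?_)
  have hlevel : (g • u).level = n := (IsTreeAction.level_smul g u).trans hu
  exact smul_eq_of_mem_rist hgx fun h => (h.level_le.trans_lt hv).ne hlevel

theorem eventually_commutator_rist_le (v : Vertex m) (N : Subgroup G) [N.Normal] [N.FiniteIndex] :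
    ∀ᶠ n in atTop, ∀ w ∈ layer m n, v.IsPrefix w →
      ⁅rist G w, rist G w⁆ ≤ ⁅rist G v ⊓ N, rist G v ⊓ N⁆ := by
  set D := ⁅rist G v ⊓ N, rist G v ⊓ N⁆
  obtain hbot | ⟨d, hd, hd1⟩ := D.bot_or_exists_ne_one
  · obtain ⟨w, hw⟩ := exists_rist_inf_eq_bot_of_commutator_eq_bot hbot
    have : Finite (rist G w) := finite_of_inf_eq_bot hw
    filter_upwards [eventually_rist_eq_bot (G := G) w] with n hn u hu _
    rw [hn u hu, commutator_bot_left]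
    exact bot_le
  · have hDv : D ≤ rist G v := (commutator_le_self _).trans inf_le_left
    have hnorm : normalizer (rist G v : Set G) ≤ normalizer D :=
      normalizer_le_normalizer_commutator_inf _ N
    obtain ⟨x, hdx⟩ := exists_smul_ne_of_ne_one (α := Vertex m) hd1
    have hvx : v.IsPrefix x := by_contra fun hvx => hdx (smul_eq_of_mem_rist (hDv hd) hvx)
    filter_upwards [eventually_ge_atTop x.level] with n hn w hw hvw
    refine commutator_le_of_le_rist le_rfl
      ((rist_le_rist_of_isPrefix hvw).trans (le_normalizer.trans hnorm)) ?_
    exact (isTransitiveBelow_stabilizer v).not_le_stabilizer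
      ((stabilizer_le_normalizer_rist v).trans hnorm) hvx hvw (hn.trans_eq hw.symm)
      fun hDx => hdx (hDx hd)

end DerivedRigidStabilizer

section MovedLayer

/-- The vertices of level `n` moved by some element of `K`: the set `X` of the main theorem. -/
def movedLayer (m : ℕ → ℕ) {G : Type*} [Group G] [MulAction G (Vertex m)] (K : Subgroup G) (n : ℕ) :
    Set (Vertex m) :=
  {v ∈ layer m n | ¬ K ≤ stabilizer G v}

variable {m : ℕ → ℕ} {G : Type*} [Group G] [MulAction G (Vertex m)]

theorem movedLayer_subset (K : Subgroup G) (n : ℕ) : movedLayer m K n ⊆ layer m n :=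
  sep_subset _ _

theorem smul_mem_movedLayer [IsTreeAction m G] {K : Subgroup G} {n : ℕ} {g : G}
    (hg : g ∈ normalizer (K : Set G)) {v : Vertex m} (hv : v ∈ movedLayer m K n) :
    g • v ∈ movedLayer m K n :=
  ⟨(IsTreeAction.level_smul g v).trans hv.1, mt (le_stabilizer_smul_iff hg v).1 hv.2⟩

variable [IsLevelTransitive m G] (K : Subgroup G) [(normalizer (K : Set G)).FiniteIndex]

theorem eventually_le_fixingSubgroup_subtree_compl_movedLayer : ∀ᶠ n in atTop,
    K ≤ fixingSubgroup G (⋃ v ∈ layer m n \ movedLayer m K n, v.subtree) := by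
  filter_upwards [eventually_le_fixingSubgroup_subtree (m := m) K] with n hn
  simp only [fixingSubgroup_iUnion]
  exact le_iInf₂ fun v hv => hn v hv.1 (by_contra fun hKv => hv.2 ⟨hv.1, hKv⟩)

theorem eventually_commutator_ristSet_movedLayer_le [FaithfulSMul G (Vertex m)] : ∀ᶠ n in atTop,
    ⁅ristSet G (movedLayer m K n), ristSet G (movedLayer m K n)⁆ ≤ K := by
  set N := (normalizer (K : Set G)).normalCore
  obtain ⟨q, hq⟩ := (eventually_le_fixingSubgroup_subtree (m := m) K).exists
  have hbelow : ∀ᶠ n in atTop, ∀ v ∈ layer m q, ∀ w ∈ layer m n, v.IsPrefix w →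
      ⁅rist G w, rist G w⁆ ≤ ⁅rist G v ⊓ N, rist G v ⊓ N⁆ :=
    (eventually_all_finite (finite_layer m q)).2 fun v _ => eventually_commutator_rist_le v N
  filter_upwards [hbelow, eventually_ge_atTop q] with n hn hqn
  refine (commutator_ristSet_le (movedLayer_subset K n)).trans (iSup₂_le fun w hw => ?_)
  obtain ⟨v, hvw, hv⟩ := exists_isPrefix_of_le_level (hqn.trans_eq hw.1.symm)
  have hKv : ¬ K ≤ stabilizer G v := fun hKv =>
    hw.2 fun k hk => (mem_fixingSubgroup_iff G).1 (hq v hv hKv hk) w hvw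
  exact (hn v hv w hw.1 hvw).trans <|
    commutator_le_of_le_rist inf_le_left (inf_le_right.trans (normalCore_le _)) hKv

end MovedLayer

theorem IsBranchGroup.faithfulSMul {m : ℕ → ℕ} {G : Type*} [Group G] [MulAction G (Vertex m)]
    (hG : IsBranchGroup m G) : FaithfulSMul G (Vertex m) where
  eq_of_smul_eq_smul {g h} hgh := by
    refine (inv_mul_eq_one.1 (hG.faithful (h⁻¹ * g) fun v => ?_)).symm
    rw [mul_smul, hgh, inv_smul_smul]

theorem IsBranchGroup.isLevelTransitive {m : ℕ → ℕ} {G : Type*} [Group G] [MulAction G (Vertex m)]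
    (hG : IsBranchGroup m G) : IsLevelTransitive m G where
  isChild_smul_iff := hG.aut
  exists_smul_eq := hG.trans

theorem main_theorem_normal_in_finite_index_general (m : ℕ → ℕ) (G : Type*) [Group G]
    [MulAction G (Vertex m)] [FaithfulSMul G (Vertex m)] [IsLevelTransitive m G] (K : Subgroup G)
    [(normalizer (K : Set G)).FiniteIndex] :
    ∃ n₀ : ℕ, ∀ n ≥ n₀, ∃ X : Set (Vertex m), X ⊆ layer m n ∧
      (∀ g ∈ normalizer (K : Set G), ∀ v ∈ X, g • v ∈ X) ∧
      ⁅ristSet G X, ristSet G X⁆ ≤ K ∧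
      K ⊓ ristSet G (layer m n \ X) = ⊥ ∧
      ⁅K, ristSet G (layer m n \ X)⁆ = ⊥ ∧
      K ⊓ ⁅ristLayer m G n, ristLayer m G n⁆ = ⁅ristSet G X, ristSet G X⁆ := by
  rw [← eventually_atTop]
  filter_upwards [eventually_commutator_ristSet_movedLayer_le (m := m) K,
    eventually_le_fixingSubgroup_subtree_compl_movedLayer (m := m) K] with n hXK hKfix
  set X := movedLayer m K n
  set Y := layer m n \ X
  have hXn : X ⊆ layer m n := movedLayer_subset K n
  have hYfix := ristSet_le_fixingSubgroup_compl (G := G) Y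
  have hinf : K ⊓ ristSet G Y = ⊥ := eq_bot_iff.2 <|
    (inf_le_inf hKfix hYfix).trans_eq (fixingSubgroup_inf_fixingSubgroup_compl _)
  have hcomm : ⁅K, ristSet G Y⁆ = ⊥ := eq_bot_iff.2 <|
    (commutator_mono hKfix hYfix).trans_eq (commutator_fixingSubgroup_fixingSubgroup_compl _)
  have hnorm : K ≤ normalizer (ristSet G Y) :=
    (commutator_eq_bot_iff_le_centralizer.1 hcomm).trans (centralizer_le_normalizer _)
  refine ⟨X, hXn, fun g hg v hv => smul_mem_movedLayer hg hv, hXK, hinf, hcomm, le_antisymm ?_ ?_⟩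
  · calc K ⊓ ⁅ristLayer m G n, ristLayer m G n⁆
        ≤ K ⊓ (⁅ristSet G X, ristSet G X⁆ ⊔ ristSet G Y) :=
          inf_le_inf_left K (commutator_ristSet_le_commutator_sup_ristSet_sdiff subset_rfl X)
      _ = ⁅ristSet G X, ristSet G X⁆ :=
          inf_sup_eq_left_of_le_normalizer hXK (hXK.trans hnorm) hinf
  · exact le_inf hXK (commutator_mono (ristSet_mono hXn) (ristSet_mono hXn))

/-- **Main Theorem.** Let `G` be a branch group on `T`, `H ≤ G` of finite index and
`K ⊴ H`.  Then for all sufficiently large `n` there is a union `X` of `H`-orbits in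
`L_n` with `rist_G(X)' ≤ K`, `K ∩ rist_G(L_n \ X) = 1 = [K, rist_G(L_n \ X)]`, and
consequently `K ∩ rist_G(n)' = rist_G(X)'`. -/
theorem main_theorem_normal_in_finite_index
    (m : ℕ → ℕ) (hm : ∀ n, 2 ≤ m n)
    (G : Type*) [Group G] [MulAction G (Vertex m)] (hG : IsBranchGroup m G)
    (H : Subgroup G) [H.FiniteIndex]
    (K : Subgroup G) (hKH : K ≤ H) (hKn : ∀ h ∈ H, ∀ k ∈ K, h * k * h⁻¹ ∈ K) :
    ∃ n₀ : ℕ, ∀ n ≥ n₀, ∃ X : Set (Vertex m), X ⊆ layer m n ∧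
      (∀ h ∈ H, ∀ v ∈ X, h • v ∈ X) ∧
      ⁅ristSet G X, ristSet G X⁆ ≤ K ∧
      K ⊓ ristSet G (layer m n \ X) = ⊥ ∧
      ⁅K, ristSet G (layer m n \ X)⁆ = ⊥ ∧
      K ⊓ ⁅ristLayer m G n, ristLayer m G n⁆ = ⁅ristSet G X, ristSet G X⁆ := by
  have := hG.faithfulSMul
  have := hG.isLevelTransitive
  have hHK : H ≤ normalizer (K : Set G) := le_normalizer_iff.2 hKn
  have : (normalizer (K : Set G)).FiniteIndex := finiteIndex_of_le hHK
  obtain ⟨n₀, hn₀⟩ := main_theorem_normal_in_finite_index_general m G K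
  exact ⟨n₀, fun n hn => (hn₀ n hn).imp fun X hX =>
    ⟨hX.1, fun h hh => hX.2.1 h (hHK hh), hX.2.2⟩⟩
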